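/- Divided powers of X_n^− on the dual Schur basis: for all r ≥ 1, n, m ∈ ℤ, i ∈ {0,1} and every partition μ = (μ₁,…,μ_l), the following holds in W_i: X_n^{−(r)} (s_{μ'} e^{mα}e^{iα/2}) = (−1)^{r(n+1+i)} q^{r(r−1)/2} · ∑_λ q^{2|λ|} · s_{λ'} · s_{(ν(λ), μ)'} · e^{(m−r)α}e^{iα/2}, where the sum is over all partitions λ = (λ₁,…,λ_r) with at most r parts (all but finitely many terms are zero), ν(λ) := (−λ_k − 2(r−k) − (n+1−2m−i))_{k=1,…,r}, and (ν(λ), μ) ∈ ℤ^{r+l} is the juxtaposed tuple. -/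

import Mathlib

/-!
Let `B_k = ∑_j (-1)^j e_{k+j} h_j^⊥` (`bernsteinOp`), where `h_j^⊥ P` is the coefficient of `u^j` in
the image of `P` under `p_n ↦ p_n + u^n` (`shiftPowerSums`). Four facts carry the argument.

* Since `exp(-∑ (1+q^{2n}) p_n zⁿ/n) = E(-q²z) E(-z)`, where `E(z) = ∑_c e_c z^c`, the current
  `X_n^-` acts on the summand of charge `m` as `(-1)^K ∑_b q^{2b} e_b B_{K-b}` with
  `K = 2m + i - n - 1`.
* `B_k s_{ρ'} = s_{(k,ρ)'}` for every integer tuple `ρ`.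
* `B_k e_c = e_c B_k - e_{c-1} B_{k+1}` as operators.
* `s_{(η_1, η_2 + 1, …, η_r + r - 1, μ)'}` is alternating in `η`.

Let `θ_K(β) = ∑_c q^{2|c|} ∏_a e_{c_a} · s_{((K - c_a + β_a + a)_a, μ)'}` (`currentSum`), which is
alternating in `β`. Moving `B_{K-b}` past the factors `e_{c_a}` expresses the next application of
`X_n^-` to `θ_{K+2}(β)` as a sum over subsets `S` of `{0, …, r-1}` of the terms
`(-q²)^{|S|} θ_K(|S|, β + 1 - 1_S)`. For the staircase `β = (0, 1, …, r-1)` two entries of the new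
exponent coincide unless `S` is an initial segment of some length `s`, and then the new exponent is
a cyclic rearrangement, of sign `(-1)^s`, of the longer staircase. Each application thus multiplies
by `1 + q² + ⋯ + q^{2r}`, and the product of these factors is `q^{r(r-1)/2} [r]!`.

Finally, with `ρ = (0, 1, …, r-1)`, alternation kills every `c` for which `c - ρ` has a repeated
entry, and each remaining `c` with nonnegative entries is `σ(λ - ρ) + ρ` for a unique partition `λ`
and permutation `σ`; the sum over `σ` is the determinant `s_{λ'}`.
-/

open MvPolynomial

noncomputable section

/-- The base field `F = ℚ(q)`. -/
abbrev Fq : Type := RatFunc ℚ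

/-- The indeterminate `q ∈ ℚ(q)`. -/
def qq : Fq := RatFunc.X

/-- `Λ_F = F[p₁,p₂,…]`, with the variable `X n` (for `n : ℕ+`) the power sum `p_n`. -/
abbrev LamF : Type := MvPolynomial ℕ+ Fq

/-- The power sum `p_n`. -/
def ppF (n : ℕ+) : LamF := X n

/-- The family `g` with generating function `∑_k g_k t^k = exp (∑_{n≥1} c n · p_n tⁿ/n)`,
characterized by `g 0 = 1` and the recursion obtained by differentiating:
`(k+1) · g (k+1) = ∑_{i=0}^{k} c (i+1) · p_{i+1} · g (k−i)`. -/
def genFamF (c : ℕ → Fq) : ℕ → LamF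
  | 0 => 1
  | (k+1) => (((k : Fq) + 1)⁻¹) •
      ∑ i ∈ Finset.range (k+1), c (i+1) • (ppF ⟨i+1, Nat.succ_pos i⟩ * genFamF c (k - i))
  decreasing_by exact Nat.lt_succ_of_le (Nat.sub_le k i)

/-- The complete homogeneous symmetric function `h_k`. -/
def hhF : ℕ → LamF := genFamF fun _ => 1

/-- The elementary symmetric function `e_k`. -/
def eeF : ℕ → LamF := genFamF fun n => (-1)^(n+1)

/-- `h` indexed by `ℤ` (zero in negative degrees). -/
def hZF (n : ℤ) : LamF := if 0 ≤ n then hhF n.toNat else 0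

/-- `e` indexed by `ℤ` (zero in negative degrees). -/
def eZF (n : ℤ) : LamF := if 0 ≤ n then eeF n.toNat else 0

/-- The creation coefficients of `X⁺(z)`:
`exp (∑ ((1+q^{2n})q^{−n}/n)·p_n·zⁿ) = ∑_k HpF k · z^k`. -/
def HpF : ℕ → LamF := genFamF fun n => (1 + qq ^ (2*n)) * (qq⁻¹) ^ n

/-- `HpF` indexed by `ℤ`. -/
def HZp (n : ℤ) : LamF := if 0 ≤ n then HpF n.toNat else 0

/-- The annihilation avatars for `X⁺(z)`: since
`(1+q^{2n})q^{−n}/n · a_n = q^{−n}·∂/∂p_n`, the coefficient of `z^{−j}` in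
`exp (−∑ ((1+q^{2n})q^{−n}/n)·a_n·z^{−n})` is `ApF j` with `p_i ↦ i·∂/∂p_i`
substituted, where `∑_k ApF k t^k = exp (−∑ q^{−n} p_n tⁿ/n)`. -/
def ApF : ℕ → LamF := genFamF fun n => -((qq⁻¹) ^ n)

/-- The creation coefficients of `X⁻(z)`:
`exp (−∑ ((1+q^{2n})/n)·p_n·zⁿ) = ∑_k HmF k · z^k`. -/
def HmF : ℕ → LamF := genFamF fun n => -(1 + qq ^ (2*n))

/-- `HmF` indexed by `ℤ`. -/
def HZm (n : ℤ) : LamF := if 0 ≤ n then HmF n.toNat else 0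

/-- The differential operator `∏_i (i·∂/∂p_i)^(α i)`. -/
def monOpF (α : ℕ+ →₀ ℕ) : Module.End Fq LamF :=
  ((α.support.sort (· ≤ ·)).map fun (i : ℕ+) =>
    (((i : ℕ) : Fq) • (pderiv i).toLinearMap) ^ (α i)).prod

/-- `f(∂) P`: substitute `p_i ↦ i·∂/∂p_i` in `f` and apply to `P`. -/
def DopF (f : LamF) (P : LamF) : LamF := ∑ α ∈ f.support, f.coeff α • monOpF α P

/-- Bound for the weighted degree of `P` (weight of `p_i` is `i`). -/
def wboundF (P : LamF) : ℕ := P.support.sup fun α => α.sum fun i k => (i : ℕ) * k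

/-- The level-one Fock space `W_i = Λ_F ⊗ F[ℤα]e^{iα/2}`, realized as `ℤ →₀ Λ_F`;
`Finsupp.single m P` represents `P·e^{mα}e^{iα/2}`. -/
abbrev W : Type := ℤ →₀ LamF

/-- The Drinfeld current component `X_n^+` on `W_i` (the parameter `i ∈ {0,1}` enters
through `z^∂ e^{mα}e^{iα/2} = z^{2m+i} e^{mα}e^{iα/2}`): the coefficient of `z^{−n−1}` in
`X⁺(z) = exp(∑((1+q^{2n})q^{−n}/n)a_{−n}zⁿ)·exp(−∑((1+q^{2n})q^{−n}/n)a_n z^{−n})·e^α z^∂`,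
i.e. `X_n^+(P·e^{mα}) = ∑_j HpF_{j−n−1−2m−i} · (ApF j)(∂) P · e^{(m+1)α}`
(only the finitely many `j ≤ wboundF P` contribute). -/
def Xp (i n : ℤ) (w : W) : W :=
  w.sum fun m P => Finsupp.single (m+1)
    (∑ j ∈ Finset.range (wboundF P + 1),
      HZp ((j : ℤ) - n - 1 - 2*m - i) * DopF (ApF j) P)

/-- The Drinfeld current component `X_n^-` on `W_i`: the coefficient of `z^{−n−1}` in
`X⁻(z) = exp(−∑((1+q^{2n})/n)a_{−n}zⁿ)·exp(∑((1+q^{2n})/n)a_n z^{−n})·e^{−α} z^{−∂}`,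
i.e. `X_n^-(P·e^{mα}) = ∑_j HmF_{j+2m+i−n−1} · h_j(∂) P · e^{(m−1)α}`
(here `(1+q^{2n})/n · a_n = ∂/∂p_n`, whose generating family is `h`). -/
def Xm (i n : ℤ) (w : W) : W :=
  w.sum fun m P => Finsupp.single (m-1)
    (∑ j ∈ Finset.range (wboundF P + 1),
      HZm ((j : ℤ) + 2*m + i - n - 1) * DopF (hhF j) P)

/-- The `q`-factorial `[r]! = ∏_{k=1}^r (q^k − q^{−k})/(q − q^{−1})`. -/
def qfact (r : ℕ) : Fq := ∏ k ∈ Finset.range r, (qq ^ (k+1) - (qq⁻¹) ^ (k+1)) / (qq - qq⁻¹)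

/-- The divided power `x^{(r)} = x^r / [r]!` of an operator on `W`. -/
def divpow (f : W → W) (r : ℕ) (w : W) : W := (qfact r)⁻¹ • (f^[r] w)

/-- Schur function of an integer tuple: `s_ρ = det (h_{ρ_i − i + j})`. -/
def schurF {l : ℕ} (ρ : Fin l → ℤ) : LamF :=
  (Matrix.of fun i j : Fin l => hZF (ρ i - (i.1 : ℤ) + (j.1 : ℤ))).det

/-- Dual Schur function of an integer tuple: `s_{ρ'} = det (e_{ρ_i − i + j})`. -/
def schurEF {l : ℕ} (ρ : Fin l → ℤ) : LamF :=
  (Matrix.of fun i j : Fin l => eZF (ρ i - (i.1 : ℤ) + (j.1 : ℤ))).det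

/-- `q^{±∂}`: `q^{ε∂}(P·e^{mα}e^{iα/2}) = q^{ε(2m+i)}·P·e^{mα}e^{iα/2}`. -/
def qd (i ε : ℤ) (w : W) : W := w.sum fun m P => Finsupp.single m (qq ^ (ε * (2*m + i)) • P)

/-- The Chevalley generator `e₁ = X₀⁺`. -/
def che1 (i : ℤ) : W → W := Xp i 0
/-- The Chevalley generator `f₁ = X₀⁻`. -/
def chf1 (i : ℤ) : W → W := Xm i 0
/-- The Chevalley generator `e₀ = X₁⁻ ∘ q^{−∂}`. -/
def che0 (i : ℤ) (w : W) : W := Xm i 1 (qd i (-1) w)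
/-- The Chevalley generator `f₀ = q^∂ ∘ X₋₁⁺`. -/
def chf0 (i : ℤ) (w : W) : W := qd i 1 (Xp i (-1) w)



section GeneratingSeries

open Finset.HasAntidiagonal (antidiagonal mem_antidiagonal)

variable {A : Type*} [CommRing A]

lemma powerSeries_derivative_map {B : Type*} [CommRing B] (φ : A →+* B) (f : PowerSeries A) :
    PowerSeries.derivative B (PowerSeries.map φ f) =
      PowerSeries.map φ (PowerSeries.derivative A f) := by
  ext k
  simp [PowerSeries.coeff_derivative]

lemma powerSeries_eq_of_derivative_eq_mul [IsAddTorsionFree A] {x y z : PowerSeries A}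
    (hy : PowerSeries.derivative A y = x * y) (hz : PowerSeries.derivative A z = x * z)
    (h0 : PowerSeries.coeff 0 y = PowerSeries.coeff 0 z) : y = z := by
  ext k
  induction k using Nat.strong_induction_on with
  | _ k ih =>
    cases k with
    | zero => exact h0
    | succ k =>
      have coeff_succ {w : PowerSeries A} (hw : PowerSeries.derivative A w = x * w) :
          (k + 1) • PowerSeries.coeff (k + 1) w =
            ∑ p ∈ antidiagonal k, PowerSeries.coeff p.1 x * PowerSeries.coeff p.2 w := by
        rw [← PowerSeries.coeff_mul, ← hw, PowerSeries.coeff_derivative, nsmul_eq_mul, mul_comm]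
        push_cast
        rfl
      refine nsmul_right_injective k.succ_ne_zero ?_
      simp only [coeff_succ hy, coeff_succ hz]
      refine Finset.sum_congr rfl fun p hp => ?_
      rw [ih p.2 (Finset.Nat.antidiagonal.snd_lt hp)]

lemma alternating_geom_series_mul_one_add (x : A) :
    PowerSeries.mk (fun i => (-1) ^ i * x ^ (i + 1)) *
      (1 + PowerSeries.C x * PowerSeries.X) = PowerSeries.C x := by
  ext i
  rw [mul_add, mul_one, ← mul_assoc, map_add, mul_comm _ (PowerSeries.C x)]
  cases i with
  | zero => simp
  | succ i =>
    rw [PowerSeries.coeff_succ_mul_X, PowerSeries.coeff_C_mul, PowerSeries.coeff_mk,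
      PowerSeries.coeff_mk, PowerSeries.coeff_C, if_neg i.succ_ne_zero]
    ring

lemma powerSeries_eq_mul_one_add [IsAddTorsionFree A] {x : A} {a y z : PowerSeries A}
    (hy : PowerSeries.derivative A y = a * y)
    (hz : PowerSeries.derivative A z =
      (a + PowerSeries.mk fun i => (-1) ^ i * x ^ (i + 1)) * z)
    (h0 : PowerSeries.coeff 0 z = PowerSeries.coeff 0 y) :
    z = y * (1 + PowerSeries.C x * PowerSeries.X) := by
  refine powerSeries_eq_of_derivative_eq_mul hz ?_ (by simpa using h0)
  rw [Derivation.leibniz, hy, map_add, Derivation.map_one_eq_zero, Derivation.leibniz]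
  simp only [smul_eq_mul, PowerSeries.derivative_C, PowerSeries.derivative_X]
  linear_combination (-y) * alternating_geom_series_mul_one_add x

/-- The generating series `∑_k g_k t^k` of the family `g = genFamF c`. -/
def genSeries (c : ℕ → Fq) : PowerSeries LamF := PowerSeries.mk (genFamF c)

/-- The logarithmic derivative `∑_{i ≥ 0} c_{i+1} p_{i+1} t^i` of `genSeries c`. -/
def genLogDeriv (c : ℕ → Fq) : PowerSeries LamF :=
  PowerSeries.mk fun i => c (i + 1) • ppF i.succPNat

lemma genFamF_succ_mul (c : ℕ → Fq) (k : ℕ) :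
    genFamF c (k + 1) * ((k : LamF) + 1) =
      ∑ i ∈ Finset.range (k + 1), c (i + 1) • (ppF i.succPNat * genFamF c (k - i)) := by
  have hk : (k : Fq) + 1 ≠ 0 := k.cast_add_one_ne_zero
  have hC : (k : LamF) + 1 = C ((k : Fq) + 1) := by simp
  rw [genFamF, hC, mul_comm, ← smul_eq_C_mul, smul_inv_smul₀ hk]
  rfl

lemma derivative_genSeries (c : ℕ → Fq) :
    PowerSeries.derivative LamF (genSeries c) = genLogDeriv c * genSeries c := by
  ext1 k
  rw [PowerSeries.coeff_derivative, PowerSeries.coeff_mul,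
    Finset.Nat.sum_antidiagonal_eq_sum_range_succ_mk]
  simp only [genSeries, genLogDeriv, PowerSeries.coeff_mk, genFamF_succ_mul, smul_mul_assoc]

lemma coeff_zero_genSeries (c : ℕ → Fq) : PowerSeries.coeff 0 (genSeries c) = 1 := by
  simp [genSeries, genFamF]

lemma genSeries_add (c d : ℕ → Fq) : genSeries (c + d) = genSeries c * genSeries d := by
  have hlog : genLogDeriv (c + d) = genLogDeriv c + genLogDeriv d := by
    ext1 k
    simp [genLogDeriv, add_smul]
  refine powerSeries_eq_of_derivative_eq_mul (derivative_genSeries _) ?_ ?_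
  · rw [Derivation.leibniz, derivative_genSeries, derivative_genSeries, hlog, smul_eq_mul,
      smul_eq_mul]
    ring
  · rw [PowerSeries.coeff_mul]
    simp [coeff_zero_genSeries]

lemma genFamF_add (c d : ℕ → Fq) (k : ℕ) :
    genFamF (c + d) k = ∑ p ∈ antidiagonal k, genFamF c p.1 * genFamF d p.2 := by
  simpa [genSeries, PowerSeries.coeff_mul] using
    congrArg (PowerSeries.coeff k) (genSeries_add c d)

lemma genFamF_pow_mul (c : ℕ → Fq) (x : Fq) (k : ℕ) :
    genFamF (fun n => x ^ n * c n) k = x ^ k • genFamF c k := by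
  induction k using Nat.strong_induction_on with
  | _ k ih =>
    cases k with
    | zero => simp [genFamF]
    | succ k =>
      rw [genFamF, genFamF, smul_comm (x ^ (k + 1)), Finset.smul_sum (r := x ^ (k + 1))]
      congr 1
      refine Finset.sum_congr rfl fun i hi => ?_
      have hpow : x ^ (k + 1) = x ^ (i + 1) * x ^ (k - i) := by
        rw [← pow_add]
        congr 1
        have := Finset.mem_range.mp hi
        omega
      rw [ih (k - i) (by omega), mul_smul_comm, smul_smul, smul_smul, hpow]
      ring_nf

lemma genFamF_neg_pow (x : Fq) (k : ℕ) :
    genFamF (fun n => -x ^ n) k = (-x) ^ k • eeF k := by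
  rw [eeF, ← genFamF_pow_mul]
  congr 1
  funext n
  rw [neg_pow x, mul_right_comm, ← pow_add, Odd.neg_one_pow ⟨n, by ring⟩]
  ring

/-- Compare coefficients in `exp (-∑ (1 + q^{2n}) p_n zⁿ/n) = E(-q² z) E(-z)`. -/
lemma HmF_eq_sum_antidiagonal (k : ℕ) :
    HmF k = (-1 : Fq) ^ k •
      ∑ p ∈ antidiagonal k, (qq ^ 2) ^ p.1 • (eeF p.1 * eeF p.2) := by
  have hc : (fun n : ℕ => -(1 + qq ^ (2 * n))) =
      (fun n => -(qq ^ 2) ^ n) + fun n => -1 ^ n := by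
    funext n
    rw [Pi.add_apply, pow_mul, one_pow]
    ring
  rw [HmF, hc, genFamF_add, Finset.smul_sum]
  refine Finset.sum_congr rfl fun p hp => ?_
  rw [genFamF_neg_pow, genFamF_neg_pow, smul_mul_smul_comm, smul_smul,
    ← mem_antidiagonal.mp hp, neg_pow (qq ^ 2), pow_add]
  ring_nf

end GeneratingSeries

section Translation

/-- The chain rule for a derivation at a polynomial expression. -/
lemma derivation_aeval_eq_sum {R σ A : Type*} [CommSemiring R] [CommSemiring A] [Algebra R A]
    (D : Derivation R A A) (g : σ → A) {P : MvPolynomial σ R} {s : Finset σ}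
    (hP : P ∈ supported R (s : Set σ)) :
    D (aeval g P) = ∑ i ∈ s, D (g i) * aeval g (pderiv i P) := by
  classical
  induction hP using Algebra.adjoin_induction with
  | mem x hx =>
    obtain ⟨n, hn, rfl⟩ := hx
    simp only [aeval_X, pderiv_X, Pi.single_apply, apply_ite (aeval g), map_one, map_zero, mul_ite,
      mul_one, mul_zero, Finset.sum_ite_eq]
    rw [if_pos (Finset.mem_coe.mp hn)]
  | algebraMap a => simp
  | add x y _ _ hx hy => simp only [map_add, mul_add, Finset.sum_add_distrib, hx, hy]
  | mul x y _ _ hx hy =>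
    simp only [map_mul, map_add, Derivation.leibniz, smul_eq_mul, mul_add, Finset.sum_add_distrib,
      hx, hy, Finset.mul_sum, mul_left_comm]

lemma pderiv_pderiv_comm {R σ : Type*} [CommRing R] (i j : σ) (P : MvPolynomial σ R) :
    pderiv i (pderiv j P) = pderiv j (pderiv i P) := by
  classical
  have pderiv_single (a b k : σ) :
      pderiv a ((Pi.single b 1 : σ → MvPolynomial σ R) k) = 0 := by
    rw [Pi.single_apply]
    split_ifs <;> simp
  have hbracket : ⁅(pderiv i : Derivation R (MvPolynomial σ R) (MvPolynomial σ R)),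
      (pderiv j : Derivation R (MvPolynomial σ R) (MvPolynomial σ R))⁆ = 0 := by
    refine derivation_ext fun k => ?_
    rw [Derivation.commutator_apply, pderiv_X, pderiv_X, pderiv_single, pderiv_single, sub_zero,
      Derivation.coe_zero, Pi.zero_apply]
  rw [← sub_eq_zero, ← Derivation.commutator_apply, hbracket, Derivation.coe_zero, Pi.zero_apply]

/-- The translation `p_n ↦ p_n + u^n` of the power sums; the coefficient of `u^j` in
`shiftPowerSums P` is `h_j^⊥ P`. -/
def shiftPowerSums : LamF →ₐ[Fq] Polynomial LamF :=
  aeval fun n : ℕ+ => Polynomial.C (ppF n) + Polynomial.X ^ (n : ℕ)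

lemma shiftPowerSums_ppF (n : ℕ+) :
    shiftPowerSums (ppF n) = Polynomial.C (ppF n) + Polynomial.X ^ (n : ℕ) :=
  aeval_X _ n

lemma coeff_zero_shiftPowerSums (P : LamF) : (shiftPowerSums P).coeff 0 = P := by
  have h : Polynomial.constantCoeff.comp (shiftPowerSums : LamF →+* Polynomial LamF) =
      RingHom.id LamF := by
    refine ringHom_ext (fun a => by simp [shiftPowerSums]) fun n => ?_
    change (shiftPowerSums (ppF n)).coeff 0 = ppF n
    rw [shiftPowerSums_ppF]
    simp [n.ne_zero.symm]
  exact RingHom.congr_fun h P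

lemma natDegree_shiftPowerSums_le (P : LamF) : (shiftPowerSums P).natDegree ≤ wboundF P := by
  rw [shiftPowerSums, aeval_def, eval₂_eq]
  refine Polynomial.natDegree_sum_le_of_forall_le _ _ fun α hα => ?_
  have hweight : (α.sum fun i k => (i : ℕ) * k) ≤ wboundF P :=
    Finset.le_sup (f := fun α : ℕ+ →₀ ℕ => α.sum fun i k => (i : ℕ) * k) hα
  refine le_trans ?_ hweight
  rw [Polynomial.algebraMap_apply]
  refine (Polynomial.natDegree_C_mul_le _ _).trans ((Polynomial.natDegree_prod_le _ _).trans ?_)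
  refine Finset.sum_le_sum fun i _ => ?_
  refine (Polynomial.natDegree_pow_le_of_le (α i) ?_).trans_eq (mul_comm _ _)
  exact Polynomial.natDegree_add_le_of_degree_le (by simp) (Polynomial.natDegree_X_pow_le _)

lemma derivative_shiftPowerSums {P : LamF} {s : Finset ℕ+} (hP : P.vars ⊆ s) :
    Polynomial.derivative (shiftPowerSums P) =
      ∑ n ∈ s, Polynomial.C (n : LamF) * Polynomial.X ^ (n - 1 : ℕ) *
        shiftPowerSums (pderiv n P) := by
  rw [← Polynomial.derivative'_apply, ← Derivation.restrictScalars_apply Fq, shiftPowerSums,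
    derivation_aeval_eq_sum _ _ (mem_supported.mpr (Finset.coe_subset.mpr hP))]
  refine Finset.sum_congr rfl fun n _ => ?_
  rw [Derivation.restrictScalars_apply, Polynomial.derivative'_apply, map_add,
    Polynomial.derivative_C, zero_add, Polynomial.derivative_X_pow, Polynomial.C_eq_natCast]

lemma coeff_succ_shiftPowerSums_mul (k : ℕ) (P : LamF) :
    (shiftPowerSums P).coeff (k + 1) * ((k : LamF) + 1) = ∑ i ∈ Finset.range (k + 1),
      ((i : LamF) + 1) * (shiftPowerSums (pderiv i.succPNat P)).coeff (k - i) := by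
  classical
  set low : Finset ℕ+ := (Finset.range (k + 1)).map ⟨Nat.succPNat, Nat.succPNat_injective⟩
    with hlow
  rw [← Polynomial.coeff_derivative,
    derivative_shiftPowerSums (Finset.subset_union_left (s₂ := low)),
    Polynomial.finsetSum_coeff, ← Finset.sum_subset Finset.subset_union_right, Finset.sum_map]
  · refine Finset.sum_congr rfl fun i hi => ?_
    rw [mul_assoc, Polynomial.coeff_C_mul, Polynomial.coeff_X_pow_mul']
    simp [Finset.mem_range_succ_iff.mp hi]
  · intro n _ hn
    have hkn : ¬(n : ℕ) - 1 ≤ k := fun h => hn <| by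
      rw [hlow, Finset.mem_map]
      exact ⟨n.natPred, Finset.mem_range_succ_iff.mpr h, n.succPNat_natPred⟩
    rw [mul_assoc, Polynomial.coeff_C_mul, Polynomial.coeff_X_pow_mul', if_neg hkn, mul_zero]

/-- `∑ (-1)^{n-1} uⁿ tⁿ/n = log (1 + u t)`, so translation multiplies `E(t)` by `1 + u t`. -/
lemma map_shiftPowerSums_genSeries_elementary :
    PowerSeries.map (shiftPowerSums : LamF →+* Polynomial LamF)
        (genSeries fun n => (-1) ^ (n + 1)) =
      PowerSeries.map Polynomial.C (genSeries fun n => (-1) ^ (n + 1)) *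
        (1 + PowerSeries.C Polynomial.X * PowerSeries.X) := by
  have hlog : PowerSeries.map (shiftPowerSums : LamF →+* Polynomial LamF)
      (genLogDeriv fun n => (-1) ^ (n + 1)) =
      PowerSeries.map Polynomial.C (genLogDeriv fun n => (-1) ^ (n + 1)) +
        PowerSeries.mk fun i => (-1) ^ i * Polynomial.X ^ (i + 1) := by
    ext1 i
    rw [map_add, PowerSeries.coeff_map, PowerSeries.coeff_map, genLogDeriv,
      PowerSeries.coeff_mk, PowerSeries.coeff_mk, RingHom.coe_coe, map_smul, shiftPowerSums_ppF,
      smul_add, Polynomial.smul_C]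
    simp [Algebra.smul_def, pow_succ]
  refine powerSeries_eq_mul_one_add
    (a := PowerSeries.map Polynomial.C (genLogDeriv fun n => (-1) ^ (n + 1))) ?_ ?_ ?_
  · rw [powerSeries_derivative_map, derivative_genSeries, map_mul]
  · rw [powerSeries_derivative_map, derivative_genSeries, map_mul, hlog]
  · simp [genSeries, genFamF]

lemma shiftPowerSums_eeF_succ (k : ℕ) : shiftPowerSums (eeF (k + 1)) =
    Polynomial.C (eeF (k + 1)) + Polynomial.X * Polynomial.C (eeF k) := by
  have h := congrArg (PowerSeries.coeff (k + 1)) map_shiftPowerSums_genSeries_elementary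
  rw [mul_add, mul_one, ← mul_assoc, map_add, PowerSeries.coeff_succ_mul_X,
    mul_comm _ (PowerSeries.C _), PowerSeries.coeff_C_mul] at h
  simpa [genSeries, eeF] using h

lemma eZF_natCast (k : ℕ) : eZF k = eeF k := by simp [eZF]

lemma eZF_of_neg {k : ℤ} (hk : k < 0) : eZF k = 0 := if_neg hk.not_ge

lemma shiftPowerSums_eZF (k : ℤ) : shiftPowerSums (eZF k) =
    Polynomial.C (eZF k) + Polynomial.X * Polynomial.C (eZF (k - 1)) := by
  rcases lt_trichotomy k 0 with hk | rfl | hk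
  · simp [eZF_of_neg hk, eZF_of_neg (show k - 1 < 0 by omega)]
  · simp [eZF, eeF, genFamF]
  · obtain ⟨j, rfl⟩ : ∃ j : ℕ, k = (j + 1 : ℕ) := ⟨(k - 1).toNat, by omega⟩
    have hpred : (((j + 1 : ℕ) : ℤ) - 1) = j := by push_cast; ring
    rw [hpred, eZF_natCast, eZF_natCast, shiftPowerSums_eeF_succ]

end Translation

section Annihilation

open scoped IsMulCommutative

/-- The operator `i·∂/∂p_i`, which is substituted for `p_i` in `DopF`. -/
def scaledPDeriv (i : ℕ+) : Module.End Fq LamF := ((i : ℕ) : Fq) • (pderiv i).toLinearMap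

lemma scaledPDeriv_mul_comm (i j : ℕ+) :
    scaledPDeriv i * scaledPDeriv j = scaledPDeriv j * scaledPDeriv i := by
  have h : ((pderiv i).toLinearMap : Module.End Fq LamF) * (pderiv j).toLinearMap =
      (pderiv j).toLinearMap * (pderiv i).toLinearMap :=
    LinearMap.ext (pderiv_pderiv_comm i j)
  rw [scaledPDeriv, scaledPDeriv, smul_mul_smul_comm, smul_mul_smul_comm, h, mul_comm (i : Fq)]

/-- The algebra of constant-coefficient differential operators, generated by the `i·∂/∂p_i`. -/
abbrev diffOpAlgebra : Subalgebra Fq (Module.End Fq LamF) :=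
  Algebra.adjoin Fq (Set.range scaledPDeriv)

instance : IsMulCommutative diffOpAlgebra :=
  Algebra.isMulCommutative_adjoin Fq <| by
    rintro _ ⟨i, rfl⟩ _ ⟨j, rfl⟩
    exact scaledPDeriv_mul_comm i j

/-- The substitution `p_i ↦ i·∂/∂p_i`, as an algebra homomorphism. -/
def toDiffOp : LamF →ₐ[Fq] diffOpAlgebra :=
  aeval fun i => ⟨scaledPDeriv i, Algebra.subset_adjoin ⟨i, rfl⟩⟩

lemma toDiffOp_monomial (α : ℕ+ →₀ ℕ) : (toDiffOp (monomial α 1)).1 = monOpF α := by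
  rw [toDiffOp, aeval_monomial, map_one, one_mul, Finsupp.prod,
    ← Finset.sort_toFinset α.support (· ≤ ·), List.prod_toFinset _ (Finset.sort_nodup _ _)]
  change diffOpAlgebra.val _ = _
  rw [map_list_prod, List.map_map]
  rfl

lemma DopF_eq_toDiffOp (f P : LamF) : DopF f P = (toDiffOp f).1 P := by
  conv_rhs => rw [f.as_sum]
  change _ = diffOpAlgebra.val _ P
  rw [map_sum, map_sum, LinearMap.sum_apply, DopF]
  refine Finset.sum_congr rfl fun α _ => ?_
  rw [← toDiffOp_monomial, ← mul_one (f.coeff α), ← smul_eq_mul, ← smul_monomial, map_smul,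
    map_smul, smul_eq_mul, mul_one]
  rfl

lemma DopF_ppF (n : ℕ+) (P : LamF) : DopF (ppF n) P = (n : Fq) • pderiv n P := by
  simp [DopF_eq_toDiffOp, toDiffOp, ppF, scaledPDeriv]

lemma DopF_hhF_zero (P : LamF) : DopF (hhF 0) P = P := by
  rw [DopF_eq_toDiffOp, hhF, genFamF, map_one]
  rfl

lemma DopF_hhF_succ_mul (k : ℕ) (P : LamF) :
    DopF (hhF (k + 1)) P * ((k : LamF) + 1) = ∑ i ∈ Finset.range (k + 1),
      ((i : LamF) + 1) * DopF (hhF (k - i)) (pderiv i.succPNat P) := by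
  have newton : ((k : Fq) + 1) • hhF (k + 1) =
      ∑ i ∈ Finset.range (k + 1), hhF (k - i) * ppF i.succPNat := by
    have h := genFamF_succ_mul (fun _ => 1) k
    simp only [one_smul, mul_comm (ppF _)] at h
    rw [hhF, ← h, smul_eq_C_mul, mul_comm]
    simp
  have h := congrArg (fun f => diffOpAlgebra.val (toDiffOp f) P) newton
  simp only [map_smul, map_sum, map_mul, LinearMap.smul_apply, LinearMap.sum_apply,
    Module.End.mul_apply, Subalgebra.coe_val, ← DopF_eq_toDiffOp] at h
  calc DopF (hhF (k + 1)) P * ((k : LamF) + 1)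
      = ((k : Fq) + 1) • DopF (hhF (k + 1)) P := by
        rw [smul_eq_C_mul, mul_comm]
        simp
    _ = _ := h
    _ = _ := Finset.sum_congr rfl fun i _ => by
        rw [DopF_ppF, DopF_eq_toDiffOp, map_smul, ← DopF_eq_toDiffOp, smul_eq_C_mul]
        simp

theorem DopF_hhF (j : ℕ) (P : LamF) : DopF (hhF j) P = (shiftPowerSums P).coeff j := by
  induction j using Nat.strong_induction_on generalizing P with
  | _ j ih =>
    cases j with
    | zero => rw [DopF_hhF_zero, coeff_zero_shiftPowerSums]
    | succ k =>
      refine mul_right_cancel₀ (b := (k : LamF) + 1) k.cast_add_one_ne_zero ?_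
      rw [DopF_hhF_succ_mul, coeff_succ_shiftPowerSums_mul]
      exact Finset.sum_congr rfl fun i _ => by rw [ih (k - i) (by omega)]

end Annihilation

section Bernstein

/-- The linear map `A[u] → A` sending `u^j` to `g j`. -/
def coeffPairing {A : Type*} [CommSemiring A] (g : ℕ → A) : Polynomial A →ₗ[A] A :=
  Polynomial.lsum fun j => LinearMap.toSpanSingleton A A (g j)

lemma coeffPairing_monomial {A : Type*} [CommSemiring A] (g : ℕ → A) (j : ℕ) (a : A) :
    coeffPairing g (Polynomial.monomial j a) = a * g j := by
  simp [coeffPairing, Polynomial.sum_monomial_index]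

lemma coeffPairing_eq_sum_range {A : Type*} [CommSemiring A] (g : ℕ → A) {f : Polynomial A}
    {N : ℕ} (hN : f.natDegree < N) :
    coeffPairing g f = ∑ j ∈ Finset.range N, f.coeff j * g j :=
  f.sum_over_range' (f := fun j a => a * g j) (fun _ => zero_mul _) N hN

lemma coeffPairing_X_mul {A : Type*} [CommSemiring A] (g : ℕ → A) (f : Polynomial A) :
    coeffPairing g (Polynomial.X * f) = coeffPairing (fun j => g (j + 1)) f := by
  induction f using Polynomial.induction_on' with
  | add f₁ f₂ h₁ h₂ => rw [mul_add, map_add, map_add, h₁, h₂]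
  | monomial j a =>
    rw [Polynomial.X_mul_monomial, coeffPairing_monomial, coeffPairing_monomial]

/-- The operator `∑_j g_j h_j^⊥` on symmetric functions. -/
def hPerpSum (g : ℕ → LamF) : LamF →ₗ[Fq] LamF :=
  (coeffPairing g).restrictScalars Fq ∘ₗ shiftPowerSums.toLinearMap

lemma hPerpSum_apply (g : ℕ → LamF) (P : LamF) :
    hPerpSum g P = coeffPairing g (shiftPowerSums P) := rfl

lemma hPerpSum_eq_sum_range (g : ℕ → LamF) {P : LamF} {N : ℕ}
    (hN : (shiftPowerSums P).natDegree < N) :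
    hPerpSum g P = ∑ j ∈ Finset.range N, (shiftPowerSums P).coeff j * g j :=
  coeffPairing_eq_sum_range g hN

lemma hPerpSum_eZF_mul (g : ℕ → LamF) (c : ℤ) (P : LamF) :
    hPerpSum g (eZF c * P) =
      eZF c * hPerpSum g P + eZF (c - 1) * hPerpSum (fun j => g (j + 1)) P := by
  simp only [hPerpSum_apply, map_mul, shiftPowerSums_eZF, add_mul, map_add, mul_assoc,
    coeffPairing_X_mul, ← Polynomial.smul_eq_C_mul, map_smul, smul_eq_mul]

lemma Xm_single (i n m : ℤ) (P : LamF) :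
    Xm i n (Finsupp.single m P) =
      Finsupp.single (m - 1) (hPerpSum (fun j => HZm (2 * m + i - n - 1 + j)) P) := by
  rw [Xm, Finsupp.sum_single_index (by simp [DopF_hhF]), hPerpSum_eq_sum_range _
    (Nat.lt_succ_of_le (natDegree_shiftPowerSums_le P))]
  congr 1
  refine Finset.sum_congr rfl fun j _ => ?_
  rw [DopF_hhF, mul_comm]
  ring_nf

/-- The Bernstein-type operator `B_k = ∑_j (-1)^j e_{k+j} h_j^⊥`. -/
def bernsteinOp (k : ℤ) : LamF →ₗ[Fq] LamF := hPerpSum fun j => (-1) ^ j * eZF (k + j)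

lemma bernsteinOp_eZF_mul (k c : ℤ) (P : LamF) :
    bernsteinOp k (eZF c * P) = eZF c * bernsteinOp k P - eZF (c - 1) * bernsteinOp (k + 1) P := by
  have hshift : hPerpSum (fun j => (-1) ^ (j + 1) * eZF (k + (j + 1 : ℕ))) P =
      -bernsteinOp (k + 1) P := by
    rw [bernsteinOp, hPerpSum_eq_sum_range _ (Nat.lt_succ_self _),
      hPerpSum_eq_sum_range _ (Nat.lt_succ_self _), ← Finset.sum_neg_distrib]
    refine Finset.sum_congr rfl fun j _ => ?_
    rw [Nat.cast_add_one, add_right_comm, ← add_assoc]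
    ring
  rw [bernsteinOp, hPerpSum_eZF_mul, hshift, mul_neg, ← sub_eq_add_neg, bernsteinOp]

/-- Bordering by the first row `((-x)^c)_c`, the column operations reducing the columns
`M_{c+1} + x M_c` to `M_{c+1}` turn `(1, 0, …, 0)` into this row; now expand along it. -/
lemma det_succ_add_mul_castSucc {A : Type*} [CommRing A] {l : ℕ}
    (M : Matrix (Fin l) (Fin (l + 1)) A) (x : A) :
    (Matrix.of fun a c => M a c.succ + x * M a c.castSucc).det =
      ∑ c : Fin (l + 1), x ^ c.1 * (M.submatrix id c.succAbove).det := by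
  set bordered : Matrix (Fin (l + 1)) (Fin (l + 1)) A :=
    Matrix.of fun a c => (Fin.cons ((-x) ^ c.1) fun a' => M a' c : Fin (l + 1) → A) a with hb
  set reduced : Matrix (Fin (l + 1)) (Fin (l + 1)) A :=
    Matrix.of fun a c => (Fin.cons (bordered a 0) fun c' =>
      bordered a c'.succ + x * bordered a c'.castSucc : Fin (l + 1) → A) c with hr
  have hdet : bordered.det = reduced.det :=
    Matrix.det_eq_of_forall_col_eq_smul_add_pred (fun _ => -x) (by simp [hr]) (by simp [hr])
  have hreduced : reduced.det = (Matrix.of fun a c => M a c.succ + x * M a c.castSucc).det := by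
    have hone : reduced 0 0 = 1 := by simp [hr, hb]
    have hzero (c : Fin l) : reduced 0 c.succ = 0 := by simp [hr, hb, pow_succ']
    rw [Matrix.det_succ_row_zero, Fin.sum_univ_succ,
      Finset.sum_eq_zero fun c _ => by rw [hzero, mul_zero, zero_mul], add_zero, hone,
      Fin.val_zero, pow_zero, one_mul, one_mul]
    rfl
  rw [← hreduced, ← hdet, Matrix.det_succ_row_zero]
  refine Finset.sum_congr rfl fun c _ => ?_
  congr 1
  rw [hb, Matrix.of_apply, Fin.cons_zero, ← mul_pow, neg_one_mul, neg_neg]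

lemma shiftPowerSums_schurEF {l : ℕ} (ρ : Fin l → ℤ) :
    shiftPowerSums (schurEF ρ) = ∑ c : Fin (l + 1), Polynomial.monomial c.1
      (Matrix.of fun (a : Fin l) (b : Fin l) =>
        eZF (ρ a - (a.1 : ℤ) - 1 + ((c.succAbove b).1 : ℤ))).det := by
  set M : Matrix (Fin l) (Fin (l + 1)) LamF :=
    Matrix.of fun a c => eZF (ρ a - (a.1 : ℤ) - 1 + (c.1 : ℤ)) with hM
  have hshift : (shiftPowerSums : LamF →+* Polynomial LamF).mapMatrix
      (Matrix.of fun a c : Fin l => eZF (ρ a - (a.1 : ℤ) + (c.1 : ℤ))) =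
      Matrix.of fun a c => M.map Polynomial.C a c.succ +
        Polynomial.X * M.map Polynomial.C a c.castSucc := by
    ext1 a c
    simp only [RingHom.mapMatrix_apply, Matrix.map_apply, Matrix.of_apply, RingHom.coe_coe,
      shiftPowerSums_eZF, hM, Fin.val_succ, Fin.val_castSucc]
    push_cast
    ring_nf
  rw [schurEF, ← RingHom.coe_coe, RingHom.map_det, hshift, det_succ_add_mul_castSucc]
  refine Finset.sum_congr rfl fun c _ => ?_
  rw [← Polynomial.C_mul_X_pow_eq_monomial, mul_comm, RingHom.map_det]
  rfl

/-- `B_k` prepends a part: it turns the expansion of the translate of a dual Schur function in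
powers of `u` into the expansion of a determinant along its first row. -/
theorem bernsteinOp_schurEF {l : ℕ} (k : ℤ) (ρ : Fin l → ℤ) :
    bernsteinOp k (schurEF ρ) = schurEF (Fin.cons k ρ : Fin (l + 1) → ℤ) := by
  rw [bernsteinOp, hPerpSum_apply, shiftPowerSums_schurEF, map_sum, schurEF,
    Matrix.det_succ_row_zero]
  refine Finset.sum_congr rfl fun c _ => ?_
  rw [coeffPairing_monomial, mul_comm]
  congr 2
  · simp
  · ext1 a b
    simp only [Matrix.submatrix_apply, Matrix.of_apply, Fin.cons_succ, Fin.val_succ]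
    push_cast
    ring_nf

lemma support_eZF_mul_eZF_sub_subset (K : ℤ) :
    (Function.support fun b : ℤ => eZF b * eZF (K - b)) ⊆ Set.Icc 0 K := by
  refine Function.support_subset_iff'.mpr fun b hb => ?_
  rcases lt_or_ge b 0 with hneg | hnonneg
  · rw [eZF_of_neg hneg, zero_mul]
  · rw [eZF_of_neg (show K - b < 0 by grind), mul_zero]

lemma support_qq_zpow_smul_eZF_mul_eZF_sub_subset (K : ℤ) :
    (Function.support fun b : ℤ => qq ^ (2 * b) • (eZF b * eZF (K - b))) ⊆ Set.Icc 0 K :=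
  (Function.support_smul_subset_right (fun b : ℤ => qq ^ (2 * b)) _).trans
    (support_eZF_mul_eZF_sub_subset K)

lemma HZm_eq_finsum (K : ℤ) :
    HZm K = (-1 : Fq) ^ K • ∑ᶠ b : ℤ, qq ^ (2 * b) • (eZF b * eZF (K - b)) := by
  have hsupp := support_qq_zpow_smul_eZF_mul_eZF_sub_subset K
  rcases lt_or_ge K 0 with hK | hK
  · rw [Set.Icc_eq_empty hK.not_ge, Set.subset_empty_iff, Function.support_eq_empty_iff] at hsupp
    rw [HZm, if_neg hK.not_ge, finsum_eq_zero_of_forall_eq_zero (congrFun hsupp),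
      smul_zero]
  · lift K to ℕ using hK with k
    have hsupp' : (Function.support fun b : ℤ => qq ^ (2 * b) • (eZF b * eZF (k - b))) ⊆
        ((Finset.range (k + 1)).map Nat.castEmbedding : Finset ℤ) := by
      refine hsupp.trans fun b ⟨h0, hk⟩ => ?_
      lift b to ℕ using h0
      simpa [Nat.lt_succ_iff] using hk
    rw [HZm, if_pos (by positivity), Int.toNat_natCast, HmF_eq_sum_antidiagonal, zpow_natCast,
      Finset.Nat.sum_antidiagonal_eq_sum_range_succ_mk,
      finsum_eq_sum_of_support_subset _ hsupp', Finset.sum_map]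
    congr 1
    refine Finset.sum_congr rfl fun b hb => ?_
    rw [Nat.castEmbedding_apply, ← Nat.cast_sub (Finset.mem_range_succ_iff.mp hb), eZF_natCast,
      eZF_natCast, ← pow_mul]
    norm_cast

theorem hPerpSum_HZm_eq_finsum (k : ℤ) (P : LamF) :
    hPerpSum (fun j => HZm (k + j)) P =
      (-1 : Fq) ^ k • ∑ᶠ b : ℤ, qq ^ (2 * b) • (eZF b * bernsteinOp (k - b) P) := by
  set N := (shiftPowerSums P).natDegree + 1
  have hterm (b : ℤ) : qq ^ (2 * b) • (eZF b * bernsteinOp (k - b) P) =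
      ∑ j ∈ Finset.range N, ((-1 : Fq) ^ j • (shiftPowerSums P).coeff j) *
        (qq ^ (2 * b) • (eZF b * eZF (k + j - b))) := by
    rw [bernsteinOp, hPerpSum_eq_sum_range _ (Nat.lt_succ_self _), Finset.mul_sum, Finset.smul_sum]
    refine Finset.sum_congr rfl fun j _ => ?_
    rw [sub_add_eq_add_sub]
    simp only [smul_eq_C_mul, map_pow, map_neg, map_one]
    ring
  simp only [hterm]
  rw [hPerpSum_eq_sum_range _ (Nat.lt_succ_self _), finsum_sum_comm, Finset.smul_sum]
  · refine Finset.sum_congr rfl fun j _ => ?_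
    rw [← mul_finsum, HZm_eq_finsum, zpow_add₀ (by norm_num), zpow_natCast, smul_mul_assoc,
      smul_smul, mul_smul_comm]
  · intro j _
    exact (Set.finite_Icc 0 (k + j : ℤ)).subset ((Function.support_mul_subset_right _ _).trans
      (support_qq_zpow_smul_eZF_mul_eZF_sub_subset (k + j)))

end Bernstein

section Alternation

lemma eq_zero_of_comp_swap_eq_neg {ι α M : Type*} [DecidableEq ι] [AddGroup M]
    [IsAddTorsionFree M] {f : (ι → α) → M} {v : ι → α} {a b : ι}
    (hf : f (v ∘ Equiv.swap a b) = -f v) (h : v a = v b) : f v = 0 := by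
  rw [Equiv.comp_swap_eq_update, h, Function.update_eq_self, ← h, Function.update_eq_self] at hf
  exact self_eq_neg.mp hf

lemma schurEF_comp_cast {l l' : ℕ} (h : l' = l) (ρ : Fin l → ℤ) :
    schurEF (ρ ∘ Fin.cast h) = schurEF ρ := by
  subst h; rfl

lemma schurEF_eq_zero_of_le {l : ℕ} {ρ : Fin l → ℤ} {a : Fin l} (h : ρ a + l ≤ a.1) :
    schurEF ρ = 0 :=
  Matrix.det_eq_zero_of_row_eq_zero a fun c => eZF_of_neg (by have := c.2; lia)

lemma schurEF_add_val_comp_perm {l : ℕ} (η : Fin l → ℤ) (σ : Equiv.Perm (Fin l)) :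
    schurEF (fun a => η (σ a) + (a.1 : ℤ)) =
      ((Equiv.Perm.sign σ : ℤ) : LamF) * schurEF (fun a => η a + (a.1 : ℤ)) := by
  rw [schurEF, schurEF, ← Matrix.det_permute]
  simp only [add_sub_cancel_right, Matrix.submatrix, Matrix.of_apply, id]

/-- The dual Schur function of the juxtaposition of `(η_a + a)_a` and `μ`; the shift makes it
alternating in `η`. -/
def altSchur {l r : ℕ} (μ : Fin l → ℤ) (η : Fin r → ℤ) : LamF :=
  schurEF (Fin.append (fun a : Fin r => η a + (a.1 : ℤ)) μ)

lemma altSchur_comp_perm {l r : ℕ} (μ : Fin l → ℤ) (η : Fin r → ℤ) (σ : Equiv.Perm (Fin r)) :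
    altSchur μ (η ∘ σ) = ((Equiv.Perm.sign σ : ℤ) : LamF) * altSchur μ η := by
  set τ : Equiv.Perm (Fin (r + l)) := finSumFinEquiv.permCongr (σ.sumCongr 1) with hτ
  have hsign : Equiv.Perm.sign τ = Equiv.Perm.sign σ := by
    rw [Equiv.Perm.sign_permCongr, Equiv.Perm.sign_sumCongr, map_one, mul_one]
  set ζ : Fin (r + l) → ℤ := Fin.append η fun b => μ b - (r + b.1 : ℤ) with hζ
  have happend : Fin.append (fun a : Fin r => η a + (a.1 : ℤ)) μ = fun a => ζ a + (a.1 : ℤ) := by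
    funext a
    refine Fin.addCases (fun a => ?_) (fun b => ?_) a <;> simp [hζ]
  have happend_comp : Fin.append (fun a : Fin r => η (σ a) + (a.1 : ℤ)) μ =
      fun a => ζ (τ a) + (a.1 : ℤ) := by
    funext a
    refine Fin.addCases (fun a => ?_) (fun b => ?_) a <;> simp [hζ, hτ, Equiv.permCongr_apply]
  simp only [altSchur, Function.comp_apply]
  rw [happend, happend_comp, schurEF_add_val_comp_perm, hsign]

lemma altSchur_eq_zero_of_eq {l r : ℕ} (μ : Fin l → ℤ) {η : Fin r → ℤ} {a b : Fin r}
    (hab : a ≠ b) (h : η a = η b) : altSchur μ η = 0 :=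
  eq_zero_of_comp_swap_eq_neg
    (by rw [altSchur_comp_perm, Equiv.Perm.sign_swap hab]; simp) h

lemma altSchur_eq_zero_of_le {l r : ℕ} (μ : Fin l → ℤ) {η : Fin r → ℤ} {a : Fin r}
    (h : η a + (r + l : ℕ) ≤ 0) : altSchur μ η = 0 :=
  schurEF_eq_zero_of_le (a := Fin.castAdd l a) (by rw [Fin.append_left, Fin.val_castAdd]; lia)

lemma bernsteinOp_altSchur {l r : ℕ} (μ : Fin l → ℤ) (k : ℤ) (η : Fin r → ℤ) :
    bernsteinOp k (altSchur μ η) = altSchur μ (Fin.cons k (η - 1) : Fin (r + 1) → ℤ) := by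
  have hcons : (fun a : Fin (r + 1) => (Fin.cons k (η - 1) : Fin (r + 1) → ℤ) a + (a.1 : ℤ)) =
      Fin.cons k (fun a : Fin r => η a + (a.1 : ℤ)) := by
    funext a
    refine Fin.cases ?_ (fun a => ?_) a <;> simp
  rw [altSchur, altSchur, hcons, Fin.append_cons, schurEF_comp_cast, bernsteinOp_schurEF]

/-- Iterating `bernsteinOp_eZF_mul`, with `S` recording the factors whose index drops by one. -/
lemma bernsteinOp_prod_mul {ι : Type*} (c : ι → ℤ) (P : LamF) (T : Finset ι)
    (k : ℤ) :
    bernsteinOp k ((∏ a ∈ T, eZF (c a)) * P) =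
      ∑ S ∈ T.powerset, (-1) ^ S.card * ((∏ a ∈ T, eZF (c a - (S : Set ι).indicator 1 a)) *
        bernsteinOp (k + S.card) P) := by
  classical
  induction T using Finset.induction_on generalizing k with
  | empty => simp
  | insert x T hx ih =>
    rw [Finset.prod_insert hx, mul_assoc, bernsteinOp_eZF_mul, ih, ih,
      Finset.sum_powerset_insert hx, sub_eq_add_neg, Finset.mul_sum, Finset.mul_sum,
      ← Finset.sum_neg_distrib]
    congr 1 <;> refine Finset.sum_congr rfl fun S hS => ?_ <;>
      have hxS : x ∉ S := fun h => hx (Finset.mem_powerset.mp hS h)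
    · rw [Finset.prod_insert hx, Set.indicator_of_notMem (Finset.mem_coe.not.mpr hxS), sub_zero]
      ring
    · have hprod : ∏ a ∈ T, eZF (c a - (↑(insert x S) : Set ι).indicator 1 a) =
          ∏ a ∈ T, eZF (c a - (S : Set ι).indicator 1 a) := by
        refine Finset.prod_congr rfl fun a ha => ?_
        have hax : a ≠ x := ne_of_mem_of_not_mem ha hx
        simp [Set.indicator_apply, hax]
      rw [Finset.prod_insert hx, hprod, Finset.card_insert_of_notMem hxS,
        Set.indicator_of_mem (by simp), Pi.one_apply, Nat.cast_add_one, add_right_comm k, add_assoc,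
        pow_succ]
      ring

end Alternation

section CurrentSum

/-- The summand of `currentSum`. -/
def currentTerm {l r : ℕ} (μ : Fin l → ℤ) (K : ℤ) (β c : Fin r → ℤ) : LamF :=
  qq ^ (2 * ∑ a, c a) • ((∏ a, eZF (c a)) * altSchur μ fun a => K - c a + β a)

/-- The sum `∑_c q^{2|c|} ∏_a e_{c_a} · s_{((K - c_a + β_a + a)_a, μ)'}` over `c ∈ ℤ^r`, in terms of
which the `r`-th power of a component of `X⁻` is expressed. -/
def currentSum {l r : ℕ} (μ : Fin l → ℤ) (K : ℤ) (β : Fin r → ℤ) : LamF :=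
  ∑ᶠ c : Fin r → ℤ, currentTerm μ K β c

lemma support_currentTerm_subset {l r : ℕ} (μ : Fin l → ℤ) (K : ℤ) (β : Fin r → ℤ) :
    Function.support (currentTerm μ K β) ⊆ Set.Icc 0 (fun a => K + β a + (r + l : ℕ)) := by
  intro c hc
  constructor <;> intro a <;> by_contra! h <;> apply hc
  · rw [currentTerm, Finset.prod_eq_zero (Finset.mem_univ a) (eZF_of_neg h), zero_mul, smul_zero]
  · rw [currentTerm, altSchur_eq_zero_of_le (a := a) μ (by lia), mul_zero, smul_zero]

lemma hasFiniteSupport_currentTerm {l r : ℕ} (μ : Fin l → ℤ) (K : ℤ) (β : Fin r → ℤ) :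
    Function.HasFiniteSupport (currentTerm μ K β) :=
  (Set.finite_Icc _ _).subset (support_currentTerm_subset μ K β)

lemma currentTerm_comp_perm {l r : ℕ} (μ : Fin l → ℤ) (K : ℤ) (β c : Fin r → ℤ)
    (σ : Equiv.Perm (Fin r)) :
    currentTerm μ K (β ∘ σ) (c ∘ σ) =
      ((Equiv.Perm.sign σ : ℤ) : LamF) * currentTerm μ K β c := by
  have halt := altSchur_comp_perm μ (fun a => K - c a + β a) σ
  simp only [Function.comp_def] at halt
  simp only [currentTerm, Function.comp_apply]
  rw [halt, Equiv.sum_comp σ c, Equiv.prod_comp σ fun a => eZF (c a), mul_smul_comm,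
    mul_left_comm]

lemma currentSum_comp_perm {l r : ℕ} (μ : Fin l → ℤ) (K : ℤ) (β : Fin r → ℤ)
    (σ : Equiv.Perm (Fin r)) :
    currentSum μ K (β ∘ σ) = ((Equiv.Perm.sign σ : ℤ) : LamF) * currentSum μ K β := by
  rw [currentSum, currentSum, mul_finsum, ← finsum_comp_equiv (σ.symm.arrowCongr (Equiv.refl ℤ))]
  exact finsum_congr fun c => currentTerm_comp_perm μ K β c σ

lemma currentSum_eq_zero_of_eq {l r : ℕ} (μ : Fin l → ℤ) (K : ℤ) {β : Fin r → ℤ} {a b : Fin r}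
    (hab : a ≠ b) (h : β a = β b) : currentSum μ K β = 0 :=
  eq_zero_of_comp_swap_eq_neg
    (by rw [currentSum_comp_perm, Equiv.Perm.sign_swap hab]; simp) h

/-- The exponent `(|S|, β + 1 - 1_S)` arising from `β` when a new factor `e_b` is added and
moving `B_{K-b}` past the old factors lowers the indices of those in `S`. -/
def extendExponent {r : ℕ} (β : Fin r → ℤ) (S : Finset (Fin r)) : Fin (r + 1) → ℤ :=
  Fin.cons (S.card : ℤ) (β + 1 - (S : Set (Fin r)).indicator 1)

/-- The bijection `(b, c) ↦ (b, c - 1_S)`. -/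
def consSubIndicator {r : ℕ} (S : Finset (Fin r)) : ℤ × (Fin r → ℤ) ≃ (Fin (r + 1) → ℤ) :=
  ((Equiv.refl ℤ).prodCongr (Equiv.subRight ((S : Set (Fin r)).indicator 1))).trans
    (Fin.consEquiv fun _ => ℤ)

lemma consSubIndicator_apply {r : ℕ} (S : Finset (Fin r)) (b : ℤ) (c : Fin r → ℤ) :
    consSubIndicator S (b, c) = Fin.cons b (c - (S : Set (Fin r)).indicator 1) := rfl

lemma sum_consSubIndicator {r : ℕ} (S : Finset (Fin r)) (b : ℤ) (c : Fin r → ℤ) :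
    ∑ a, consSubIndicator S (b, c) a = b + ∑ a, c a - S.card := by
  have hcard : ∑ a, (S : Set (Fin r)).indicator 1 a = (S.card : ℤ) := by
    simp [Set.indicator_apply]
  rw [consSubIndicator_apply, Fin.sum_cons, ← hcard, add_sub_assoc, ← Finset.sum_sub_distrib]
  rfl

lemma qq_ne_zero : qq ≠ 0 := RatFunc.X_ne_zero

lemma neg_qq_sq_pow_mul_zpow (s : ℕ) (t : ℤ) :
    (-qq ^ 2) ^ s * qq ^ (2 * (t - s)) = (-1) ^ s * qq ^ (2 * t) := by
  rw [neg_pow, mul_sub, zpow_sub₀ qq_ne_zero, mul_assoc, ← pow_mul, ← zpow_natCast qq,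
    Nat.cast_mul, Nat.cast_ofNat, mul_div_cancel₀ _ (zpow_ne_zero _ qq_ne_zero)]

lemma neg_qq_sq_pow_smul_currentTerm {l r : ℕ} (μ : Fin l → ℤ) (K b : ℤ) (β c : Fin r → ℤ)
    (S : Finset (Fin r)) :
    (-qq ^ 2) ^ S.card • currentTerm μ K (extendExponent β S) (consSubIndicator S (b, c)) =
      qq ^ (2 * (b + ∑ a, c a)) • (eZF b * ((-1) ^ S.card *
        ((∏ a, eZF (c a - (S : Set (Fin r)).indicator 1 a)) *
          bernsteinOp (K - b + S.card) (altSchur μ fun a => K + 2 - c a + β a)))) := by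
  have hrow : (fun a => K - consSubIndicator S (b, c) a + extendExponent β S a) =
      Fin.cons (K - b + S.card) ((fun a => K + 2 - c a + β a) - 1) := by
    funext a
    refine Fin.cases ?_ (fun a => ?_) a
    · simp [consSubIndicator_apply, extendExponent]
    · simp only [consSubIndicator_apply, extendExponent, Fin.cons_succ, Pi.sub_apply, Pi.add_apply,
        Pi.one_apply]
      ring
  rw [currentTerm, hrow, ← bernsteinOp_altSchur, sum_consSubIndicator, smul_smul,
    neg_qq_sq_pow_mul_zpow, mul_comm, mul_smul, Fin.prod_univ_succ]
  simp only [consSubIndicator_apply, Fin.cons_zero, Fin.cons_succ, Pi.sub_apply, smul_eq_C_mul,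
    map_pow, map_neg, map_one]
  ring

lemma qq_zpow_smul_eZF_mul_bernsteinOp_currentTerm {l r : ℕ} (μ : Fin l → ℤ) (K b : ℤ)
    (β c : Fin r → ℤ) :
    qq ^ (2 * b) • (eZF b * bernsteinOp (K - b) (currentTerm μ (K + 2) β c)) =
      ∑ S : Finset (Fin r), (-qq ^ 2) ^ S.card •
        currentTerm μ K (extendExponent β S) (consSubIndicator S (b, c)) := by
  rw [currentTerm, map_smul, bernsteinOp_prod_mul, Finset.powerset_univ, mul_smul_comm, smul_smul,
    ← zpow_add₀ qq_ne_zero, ← mul_add, Finset.mul_sum, Finset.smul_sum]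
  exact Finset.sum_congr rfl fun S _ => (neg_qq_sq_pow_smul_currentTerm μ K b β c S).symm

lemma qq_zpow_smul_eZF_mul_bernsteinOp_currentSum {l r : ℕ} (μ : Fin l → ℤ) (K b : ℤ)
    (β : Fin r → ℤ) :
    qq ^ (2 * b) • (eZF b * bernsteinOp (K - b) (currentSum μ (K + 2) β)) =
      ∑ᶠ c : Fin r → ℤ, ∑ S : Finset (Fin r), (-qq ^ 2) ^ S.card •
        currentTerm μ K (extendExponent β S) (consSubIndicator S (b, c)) := by
  have hmap := (bernsteinOp (K - b)).toAddMonoidHom.map_finsum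
    (hasFiniteSupport_currentTerm μ (K + 2) β)
  rw [LinearMap.toAddMonoidHom_coe] at hmap
  rw [currentSum, hmap, mul_finsum, smul_finsum]
  exact finsum_congr fun c => qq_zpow_smul_eZF_mul_bernsteinOp_currentTerm μ K b β c

theorem finsum_eZF_mul_bernsteinOp_currentSum {l r : ℕ} (μ : Fin l → ℤ) (K : ℤ) (β : Fin r → ℤ) :
    ∑ᶠ b : ℤ, qq ^ (2 * b) • (eZF b * bernsteinOp (K - b) (currentSum μ (K + 2) β)) =
      ∑ S : Finset (Fin r), (-qq ^ 2) ^ S.card • currentSum μ K (extendExponent β S) := by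
  set term : Finset (Fin r) → ℤ × (Fin r → ℤ) → LamF := fun S p =>
    (-qq ^ 2) ^ S.card • currentTerm μ K (extendExponent β S) (consSubIndicator S p)
  have hfin (S : Finset (Fin r)) : Function.HasFiniteSupport (term S) :=
    ((hasFiniteSupport_currentTerm μ K (extendExponent β S)).comp_of_injective
      (consSubIndicator S).injective).smul_right fun _ => (-qq ^ 2) ^ S.card
  calc _ = ∑ᶠ (b : ℤ) (c : Fin r → ℤ), ∑ S, term S (b, c) :=
        finsum_congr fun b => qq_zpow_smul_eZF_mul_bernsteinOp_currentSum μ K b β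
    _ = ∑ᶠ p, ∑ S, term S p := (finsum_curry _ (.sum hfin _)).symm
    _ = ∑ S, ∑ᶠ p, term S p := finsum_sum_comm _ _ fun S _ => hfin S
    _ = _ := Finset.sum_congr rfl fun S _ => by
        rw [← smul_finsum, finsum_comp_equiv (consSubIndicator S), currentSum]

end CurrentSum

section Staircase

lemma isLowerSet_of_covBy {α : Type*} [PartialOrder α] [LocallyFiniteOrder α] {s : Set α}
    (h : ∀ ⦃a b : α⦄, a ⋖ b → b ∈ s → a ∈ s) : IsLowerSet s := fun _ _ hab hb =>
  (le_iff_reflTransGen_covBy.mp hab).head_induction_on hb fun hac _ hc => h hac hc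

/-- The staircase exponent `(0, 1, …, r - 1)`. -/
def staircase (r : ℕ) : Fin r → ℤ := fun a => a.1

/-- The initial segment `{0, …, s - 1}` of `Fin r`. -/
def initialSegment {r : ℕ} (s : Fin (r + 1)) : Finset (Fin r) :=
  Finset.univ.filter fun a => a.castSucc < s

lemma mem_initialSegment {r : ℕ} {s : Fin (r + 1)} {a : Fin r} :
    a ∈ initialSegment s ↔ a.castSucc < s := by simp [initialSegment]

lemma card_initialSegment {r : ℕ} (s : Fin (r + 1)) : (initialSegment s).card = s.1 := by
  simp only [initialSegment, Fin.lt_def, Fin.val_castSucc, Fin.card_filter_val_lt]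
  exact min_eq_right s.is_le

lemma initialSegment_injective {r : ℕ} : Function.Injective (initialSegment (r := r)) :=
  fun s t h => Fin.ext <| by rw [← card_initialSegment, h, card_initialSegment]

lemma exists_initialSegment_eq_of_isLowerSet {r : ℕ} {S : Finset (Fin r)}
    (hS : IsLowerSet (S : Set (Fin r))) : ∃ s, initialSegment s = S := by
  rcases hS.eq_univ_or_Iio with h | ⟨a, h⟩
  · refine ⟨Fin.last r, ?_⟩
    rw [Finset.coe_eq_univ.mp h]
    exact Finset.filter_true_of_mem fun a _ => a.castSucc_lt_last
  · refine ⟨a.castSucc, ?_⟩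
    rw [← Finset.coe_inj, h]
    ext b
    simp [mem_initialSegment]

lemma extendExponent_staircase_initialSegment {r : ℕ} (s : Fin (r + 1)) :
    extendExponent (staircase r) (initialSegment s) = staircase (r + 1) ∘ s.cycleRange.symm := by
  funext a
  refine Fin.cases ?_ (fun a => ?_) a
  · simp [extendExponent, card_initialSegment, staircase]
  · simp only [extendExponent, Fin.cons_succ, Pi.sub_apply, Pi.add_apply, Pi.one_apply,
      Function.comp_apply, Fin.cycleRange_symm_succ, staircase]
    rcases lt_or_ge a.castSucc s with h | h
    · rw [Fin.succAbove_of_castSucc_lt _ _ h,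
        Set.indicator_of_mem (Finset.mem_coe.mpr (mem_initialSegment.mpr h))]
      simp
    · rw [Fin.succAbove_of_le_castSucc _ _ h,
        Set.indicator_of_notMem fun ha => h.not_gt (mem_initialSegment.mp (Finset.mem_coe.mp ha))]
      simp

lemma currentSum_extendExponent_initialSegment {l r : ℕ} (μ : Fin l → ℤ) (K : ℤ)
    (s : Fin (r + 1)) :
    currentSum μ K (extendExponent (staircase r) (initialSegment s)) =
      (-1) ^ s.1 * currentSum μ K (staircase (r + 1)) := by
  rw [extendExponent_staircase_initialSegment, currentSum_comp_perm, Equiv.Perm.sign_symm,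
    Fin.sign_cycleRange]
  push_cast
  rfl

lemma currentSum_extendExponent_eq_zero {l r : ℕ} (μ : Fin l → ℤ) (K : ℤ) {S : Finset (Fin r)}
    (hS : ¬ IsLowerSet (S : Set (Fin r))) :
    currentSum μ K (extendExponent (staircase r) S) = 0 := by
  have hcovBy : ∃ a b : Fin r, a ⋖ b ∧ b ∈ S ∧ a ∉ S := by
    by_contra! h
    exact hS (isLowerSet_of_covBy h)
  obtain ⟨a, b, hab, hb, ha⟩ := hcovBy
  refine currentSum_eq_zero_of_eq μ K ((Fin.succ_injective r).ne hab.lt.ne) ?_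
  have hval : a.1 + 1 = b.1 := Nat.covBy_iff_add_one_eq.mp (Fin.covBy_iff.mp hab)
  simp [extendExponent, staircase, ha, hb, ← hval]

theorem finsum_eZF_mul_bernsteinOp_currentSum_staircase {l : ℕ} (μ : Fin l → ℤ) (K : ℤ) (r : ℕ) :
    ∑ᶠ b : ℤ, qq ^ (2 * b) • (eZF b * bernsteinOp (K - b) (currentSum μ (K + 2) (staircase r))) =
      (∑ s ∈ Finset.range (r + 1), (qq ^ 2) ^ s) • currentSum μ K (staircase (r + 1)) := by
  rw [finsum_eZF_mul_bernsteinOp_currentSum, ← Fin.sum_univ_eq_sum_range (fun s => (qq ^ 2) ^ s),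
    Finset.sum_smul]
  refine (Finset.sum_of_injOn initialSegment initialSegment_injective.injOn (by simp) ?_ ?_).symm
  · intro S _ hS
    rw [currentSum_extendExponent_eq_zero, smul_zero]
    intro hlower
    obtain ⟨s, rfl⟩ := exists_initialSegment_eq_of_isLowerSet hlower
    exact hS ⟨s, by simp, rfl⟩
  · intro s _
    rw [currentSum_extendExponent_initialSegment, card_initialSegment, neg_pow (qq ^ 2),
      smul_eq_C_mul, smul_eq_C_mul]
    simp only [map_mul, map_pow, map_neg, map_one]
    rw [mul_mul_mul_comm, ← mul_pow]
    simp

lemma currentSum_staircase_zero {l : ℕ} (μ : Fin l → ℤ) (K : ℤ) :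
    currentSum μ K (staircase 0) = schurEF μ := by
  rw [currentSum, finsum_unique, currentTerm, altSchur, Fin.append_left_nil _ _ rfl,
    schurEF_comp_cast]
  simp

end Staircase

section Iteration

lemma qq_pow_ne_one {n : ℕ} (hn : n ≠ 0) : qq ^ n ≠ 1 := fun h => by
  have hX : (Polynomial.X ^ n : Polynomial ℚ) = 1 :=
    RatFunc.algebraMap_injective ℚ (by rwa [map_pow, RatFunc.algebraMap_X, map_one])
  simpa [hn] using congrArg Polynomial.natDegree hX

lemma sub_inv_pow_div_sub_inv {K : Type*} [Field K] {x : K} (hx : x ≠ 0) (hx_sq : x ^ 2 ≠ 1)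
    (k : ℕ) : (x ^ (k + 1) - x⁻¹ ^ (k + 1)) / (x - x⁻¹) =
      (x ^ k)⁻¹ * ∑ s ∈ Finset.range (k + 1), (x ^ 2) ^ s := by
  have hsub : x ^ 2 - 1 ≠ 0 := sub_ne_zero.mpr hx_sq
  have hsub_inv : x - x⁻¹ = x⁻¹ * (x ^ 2 - 1) := by field_simp
  rw [geom_sum_eq hx_sq, hsub_inv, inv_pow]
  field_simp
  ring

lemma qfact_succ (r : ℕ) :
    qfact (r + 1) = qfact r * ((qq ^ r)⁻¹ * ∑ s ∈ Finset.range (r + 1), (qq ^ 2) ^ s) := by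
  rw [qfact, Finset.prod_range_succ, ← qfact,
    sub_inv_pow_div_sub_inv qq_ne_zero (qq_pow_ne_one two_ne_zero)]

lemma qfact_ne_zero (r : ℕ) : qfact r ≠ 0 := by
  induction r with
  | zero => simp [qfact]
  | succ r ih =>
    have hgeom : ∑ s ∈ Finset.range (r + 1), (qq ^ 2) ^ s ≠ 0 := fun h => by
      have hmul := geom_sum_mul (qq ^ 2) (r + 1)
      rw [h, zero_mul, ← pow_mul, eq_comm, sub_eq_zero] at hmul
      exact qq_pow_ne_one (by positivity) hmul
    rw [qfact_succ]
    exact mul_ne_zero ih (mul_ne_zero (inv_ne_zero (pow_ne_zero _ qq_ne_zero)) hgeom)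

lemma qq_zpow_mul_qfact_succ (r : ℕ) :
    qq ^ (((r + 1 : ℕ) : ℤ) * (((r + 1 : ℕ) : ℤ) - 1) / 2) * qfact (r + 1) =
      qq ^ ((r : ℤ) * ((r : ℤ) - 1) / 2) * qfact r *
        ∑ s ∈ Finset.range (r + 1), (qq ^ 2) ^ s := by
  have hexp : ((r + 1 : ℕ) : ℤ) * (((r + 1 : ℕ) : ℤ) - 1) / 2 =
      (r : ℤ) * ((r : ℤ) - 1) / 2 + r := by
    rw [← Int.add_mul_ediv_right _ _ (by norm_num : (2 : ℤ) ≠ 0)]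
    push_cast
    ring_nf
  have hpow := pow_ne_zero r qq_ne_zero
  rw [hexp, zpow_add₀ qq_ne_zero, zpow_natCast, qfact_succ]
  field_simp

lemma neg_one_zpow_eq_of_even_sub {K : Type*} [DivisionRing K] {a b : ℤ} (h : Even (a - b)) :
    (-1 : K) ^ a = (-1) ^ b := by
  rw [← sub_add_cancel a b, zpow_add₀ (neg_ne_zero.mpr one_ne_zero), h.neg_one_zpow, one_mul]

lemma Xm_single_smul (i n m : ℤ) (x : Fq) (P : LamF) :
    Xm i n (Finsupp.single m (x • P)) = x • Xm i n (Finsupp.single m P) := by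
  rw [Xm_single, Xm_single, map_smul, Finsupp.smul_single]

lemma Xm_single_currentSum_staircase {l : ℕ} (μ : Fin l → ℤ) (n m i : ℤ) (r : ℕ) :
    Xm i n (Finsupp.single m (currentSum μ (2 * m + i - n - 1 + 2) (staircase r))) =
      Finsupp.single (m - 1) (((-1 : Fq) ^ (n + 1 + i) *
        ∑ s ∈ Finset.range (r + 1), (qq ^ 2) ^ s) •
          currentSum μ (2 * m + i - n - 1) (staircase (r + 1))) := by
  have hsign : (-1 : Fq) ^ (2 * m + i - n - 1) = (-1) ^ (n + 1 + i) :=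
    neg_one_zpow_eq_of_even_sub ⟨m - n - 1, by ring⟩
  rw [Xm_single, hPerpSum_HZm_eq_finsum, finsum_eZF_mul_bernsteinOp_currentSum_staircase,
    smul_smul, hsign]

theorem iterate_Xm_single_schurEF {l : ℕ} (μ : Fin l → ℤ) (n m i : ℤ) (r : ℕ) :
    (Xm i n)^[r] (Finsupp.single m (schurEF μ)) =
      Finsupp.single (m - r) (((-1 : Fq) ^ ((r : ℤ) * (n + 1 + i)) *
        (qq ^ ((r : ℤ) * ((r : ℤ) - 1) / 2) * qfact r)) •
          currentSum μ (2 * m + i - n - 1 - 2 * r + 2) (staircase r)) := by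
  induction r with
  | zero => simp [currentSum_staircase_zero, qfact]
  | succ r ih =>
    have hcharge : m - (r : ℤ) - 1 = m - (r + 1 : ℕ) := by push_cast; ring
    have hindex : 2 * m + i - n - 1 - 2 * r + 2 = 2 * (m - r) + i - n - 1 + 2 := by ring
    have hindex_succ : 2 * m + i - n - 1 - 2 * (r + 1 : ℕ) + 2 = 2 * (m - r) + i - n - 1 := by
      push_cast
      ring
    have hsign : (-1 : Fq) ^ (((r + 1 : ℕ) : ℤ) * (n + 1 + i)) =
        (-1) ^ ((r : ℤ) * (n + 1 + i)) * (-1) ^ (n + 1 + i) := by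
      rw [Nat.cast_add_one, add_one_mul, zpow_add₀ (neg_ne_zero.mpr one_ne_zero)]
    rw [Function.iterate_succ_apply', ih, Xm_single_smul, hindex, Xm_single_currentSum_staircase,
      Finsupp.smul_single, smul_smul, hcharge, hindex_succ, hsign, qq_zpow_mul_qfact_succ]
    congr 2
    ring

end Iteration

section Regrouping

/-- The type of weakly decreasing `r`-tuples, i.e. partitions with at most `r` parts. -/
abbrev AntitoneTuple (r : ℕ) : Type := {lam : Fin r → ℕ // Antitone lam}

/-- The strictly decreasing tuple `λ - (0, 1, …, r - 1)`. -/
def AntitoneTuple.shift {r : ℕ} (lam : AntitoneTuple r) (a : Fin r) : ℤ := lam.1 a - a.1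

lemma AntitoneTuple.strictAnti_shift {r : ℕ} (lam : AntitoneTuple r) : StrictAnti lam.shift :=
  fun _ _ hab => Int.sub_lt_sub_of_le_of_lt (mod_cast lam.2 hab.le) (mod_cast hab)

lemma AntitoneTuple.shift_injective {r : ℕ} :
    Function.Injective (AntitoneTuple.shift (r := r)) := fun lam lam' h =>
  Subtype.ext <| funext fun a => by simpa [shift] using congrFun h a

/-- The exponent `σ(λ - ρ) + ρ`, where `ρ = (0, 1, …, r - 1)`, of the monomial attached to `σ` in
the expansion of `s_{λ'}` as a determinant in the `e_c`. -/
def detExponent {r : ℕ} (p : AntitoneTuple r × Equiv.Perm (Fin r)) (a : Fin r) : ℤ :=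
  p.1.shift (p.2 a) + a.1

lemma detExponent_injective {r : ℕ} : Function.Injective (detExponent (r := r)) := by
  rintro ⟨lam, σ⟩ ⟨lam', σ'⟩ h
  have hcomp : lam.shift ∘ σ = lam'.shift ∘ σ' := by
    funext a
    simpa [detExponent] using congrFun h a
  have hshift : lam.shift = lam'.shift := by
    rw [← StrictAnti.range_inj lam.strictAnti_shift lam'.strictAnti_shift,
      ← σ.surjective.range_comp lam.shift, hcomp, σ'.surjective.range_comp]
  obtain rfl := AntitoneTuple.shift_injective hshift
  obtain rfl : σ = σ' := Equiv.ext fun a => lam.strictAnti_shift.injective (congrFun hcomp a)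
  rfl

lemma exists_perm_strictAnti_comp {r : ℕ} {α : Type*} [LinearOrder α] {d : Fin r → α}
    (hd : Function.Injective d) : ∃ τ : Equiv.Perm (Fin r), StrictAnti (d ∘ τ) :=
  ⟨Tuple.sort (OrderDual.toDual ∘ d),
    (Tuple.monotone_sort (OrderDual.toDual ∘ d)).strictMono_of_injective
      (hd.comp (Equiv.injective _))⟩

lemma antitone_add_val_of_strictAnti {r : ℕ} {d : Fin r → ℤ} (hd : StrictAnti d) :
    Antitone fun a => d a + (a.1 : ℤ) := by
  cases r with
  | zero => exact Subsingleton.antitone _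
  | succ r =>
    refine Fin.antitone_iff_succ_le.mpr fun a => ?_
    have hlt : d a.succ < d a.castSucc := hd a.castSucc_lt_succ
    simp only [Fin.val_succ, Fin.val_castSucc]
    lia

/-- Sorting `c - ρ` into decreasing order yields `λ - ρ`; the last part of `λ` is
`c_x + (r - 1 - x)` for some `x`, hence nonnegative. -/
lemma mem_range_detExponent {r : ℕ} {c : Fin r → ℤ} (hc : 0 ≤ c)
    (hinj : Function.Injective (c - staircase r)) : c ∈ Set.range (detExponent (r := r)) := by
  obtain ⟨τ, hτ⟩ := exists_perm_strictAnti_comp hinj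
  have hanti := antitone_add_val_of_strictAnti hτ
  have hnonneg (a : Fin r) : 0 ≤ ((c - staircase r) ∘ τ) a + (a.1 : ℤ) := by
    obtain ⟨r, rfl⟩ := Nat.exists_eq_add_one.mpr a.pos
    refine le_trans ?_ (hanti (Fin.le_last a))
    have hlast := hc (τ (Fin.last r))
    have hle := (τ (Fin.last r)).is_le
    simp only [Pi.zero_apply] at hlast
    simp only [Function.comp_apply, Pi.sub_apply, staircase, Fin.val_last]
    lia
  refine ⟨(⟨_, fun a b hab => Int.toNat_le_toNat (hanti hab)⟩, τ.symm), ?_⟩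
  funext a
  simp only [detExponent, AntitoneTuple.shift, Int.toNat_of_nonneg (hnonneg _)]
  simp [staircase]

lemma support_currentTerm_staircase_subset {l r : ℕ} (μ : Fin l → ℤ) (K : ℤ) :
    Function.support (currentTerm μ K (staircase r)) ⊆ Set.range (detExponent (r := r)) := by
  intro c hc
  refine mem_range_detExponent (support_currentTerm_subset μ K _ hc).1 fun a b hab => ?_
  by_contra hne
  refine hc ?_
  simp only [Pi.sub_apply] at hab
  rw [currentTerm, altSchur_eq_zero_of_eq μ hne (by lia), mul_zero, smul_zero]

lemma sum_detExponent {r : ℕ} (lam : AntitoneTuple r) (σ : Equiv.Perm (Fin r)) :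
    ∑ a, detExponent (lam, σ) a = ((∑ k, lam.1 k : ℕ) : ℤ) := by
  simp only [detExponent, Finset.sum_add_distrib]
  rw [Equiv.sum_comp σ lam.shift, ← Finset.sum_add_distrib, Nat.cast_sum]
  exact Finset.sum_congr rfl fun a _ => sub_add_cancel _ _

lemma sum_perm_currentTerm_detExponent {l r : ℕ} (μ : Fin l → ℤ) (K : ℤ) (lam : AntitoneTuple r) :
    ∑ σ : Equiv.Perm (Fin r), currentTerm μ K (staircase r) (detExponent (lam, σ)) =
      qq ^ (2 * ((∑ k, lam.1 k : ℕ) : ℤ)) •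
        (schurEF (fun k => (lam.1 k : ℤ)) * altSchur μ fun a => K - lam.shift a) := by
  rw [schurEF, Matrix.det_apply, Finset.sum_mul, Finset.smul_sum]
  refine Finset.sum_congr rfl fun σ _ => ?_
  have hrow : (fun a => K - detExponent (lam, σ) a + staircase r a) =
      (fun a => K - lam.shift a) ∘ σ := by
    funext a
    simp only [detExponent, staircase, Function.comp_apply]
    ring
  rw [currentTerm, sum_detExponent, hrow, altSchur_comp_perm, Units.smul_def, zsmul_eq_mul,
    mul_left_comm, mul_assoc]
  rfl

lemma currentSum_staircase_eq_finsum_detExponent {l r : ℕ} (μ : Fin l → ℤ) (K : ℤ) :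
    currentSum μ K (staircase r) =
      ∑ᶠ (lam : AntitoneTuple r) (σ : Equiv.Perm (Fin r)),
        currentTerm μ K (staircase r) (detExponent (lam, σ)) := by
  have hfin := (hasFiniteSupport_currentTerm μ K (staircase r)).fun_comp_of_injective
    detExponent_injective
  rw [← finsum_curry _ hfin, ← finsum_mem_range detExponent_injective, currentSum,
    ← finsum_mem_univ]
  exact finsum_mem_inter_support_eq' _ _ _ fun c hc =>
    iff_of_true trivial (support_currentTerm_staircase_subset μ K hc)

theorem currentSum_staircase {l r : ℕ} (μ : Fin l → ℤ) (K : ℤ) :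
    currentSum μ K (staircase r) = ∑ᶠ (lam : Fin r → ℕ) (_ : Antitone lam),
      qq ^ (2 * ((∑ k, lam k : ℕ) : ℤ)) • (schurEF (fun k => (lam k : ℤ)) *
        schurEF (Fin.append (fun k : Fin r => K - (lam k : ℤ) + 2 * (k.1 : ℤ)) μ)) := by
  rw [currentSum_staircase_eq_finsum_detExponent, ← finsum_subtype_eq_finsum_cond]
  refine finsum_congr fun lam => ?_
  have hrow : (fun a : Fin r => K - lam.shift a + (a.1 : ℤ)) =
      fun k : Fin r => K - (lam.1 k : ℤ) + 2 * (k.1 : ℤ) := by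
    funext a
    rw [AntitoneTuple.shift]
    ring
  rw [finsum_eq_sum_of_fintype, sum_perm_currentTerm_detExponent, altSchur, hrow]

end Regrouping

theorem divided_power_Xminus_on_dual_schur_general (r : ℕ) (n m i : ℤ) {l : ℕ} (μ : Fin l → ℤ) :
    divpow (Xm i n) r (Finsupp.single m (schurEF μ)) =
      Finsupp.single (m - r)
        ((-1 : Fq) ^ ((r : ℤ) * (n + 1 + i)) •
          qq ^ ((r : ℤ) * ((r : ℤ) - 1) / 2) •
            ∑ᶠ (lam : Fin r → ℕ) (_ : Antitone lam),
              qq ^ (2 * ((∑ k, lam k : ℕ) : ℤ)) •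
                (schurEF (fun k => (lam k : ℤ)) *
                  schurEF (Fin.append
                    (fun k : Fin r => -(lam k : ℤ) - 2 * ((r : ℤ) - 1 - (k.1 : ℤ))
                      - (n + 1 - 2 * m - i)) μ))) := by
  have hrow (lam : Fin r → ℕ) (k : Fin r) :
      2 * m + i - n - 1 - 2 * r + 2 - (lam k : ℤ) + 2 * (k.1 : ℤ) =
        -(lam k : ℤ) - 2 * ((r : ℤ) - 1 - (k.1 : ℤ)) - (n + 1 - 2 * m - i) := by ring
  have hscalar : (qfact r)⁻¹ * ((-1) ^ ((r : ℤ) * (n + 1 + i)) *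
      (qq ^ ((r : ℤ) * ((r : ℤ) - 1) / 2) * qfact r)) =
        (-1) ^ ((r : ℤ) * (n + 1 + i)) * qq ^ ((r : ℤ) * ((r : ℤ) - 1) / 2) := by
    have hfact := qfact_ne_zero r
    field_simp
  rw [divpow, iterate_Xm_single_schurEF, Finsupp.smul_single, smul_smul, hscalar, mul_smul,
    currentSum_staircase]
  simp only [hrow]

/-- divided powers of `X_n^−` on the dual Schur basis.  For `r ≥ 1`,
`n, m ∈ ℤ`, `i ∈ {0,1}` and a partition `μ = (μ₁,…,μ_l)`:
`X_n^{−(r)} (s_{μ'} e^{mα}e^{iα/2})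
  = (−1)^{r(n+1+i)} q^{r(r−1)/2} ∑_λ q^{2|λ|} · s_{λ'} · s_{(ν(λ),μ)'} · e^{(m−r)α}e^{iα/2}`,
the sum over partitions `λ` with at most `r` parts (weakly decreasing tuples in `ℕ^r`;
all but finitely many summands vanish), where
`ν(λ)_k := −λ_k − 2(r−k) − (n+1−2m−i)` (`k = 1,…,r`), and `s_{ρ'} = det (e_{ρ_a−a+b})`. -/
theorem divided_power_Xminus_on_dual_schur (r : ℕ) (hr : 1 ≤ r) (n m i : ℤ)
    (hi : i = 0 ∨ i = 1) (l : ℕ) (mu : Fin l → ℕ) (hmu : Antitone mu) :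
    divpow (Xm i n) r (Finsupp.single m (schurEF fun k => (mu k : ℤ)))
      = Finsupp.single (m - r)
          (((-1 : Fq)) ^ ((r : ℤ) * (n + 1 + i)) •
            qq ^ ((r : ℤ) * ((r : ℤ) - 1) / 2) •
              ∑ᶠ (lam : Fin r → ℕ) (_ : Antitone lam),
                qq ^ (2 * ((∑ k, lam k : ℕ) : ℤ)) •
                  (schurEF (fun k => (lam k : ℤ)) *
                    schurEF (Fin.append
                      (fun k : Fin r => -(lam k : ℤ) - 2*((r : ℤ) - 1 - (k.1 : ℤ))
                        - (n + 1 - 2*m - i))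
                      (fun k => (mu k : ℤ))))) := by
  exact divided_power_Xminus_on_dual_schur_general r n m i fun k => (mu k : ℤ)
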